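/- Let B be a supersoluble brace. Then the additive group (B,+) is nilpotent if and only if B = Soc_n(B) for some n ∈ ℕ. -/

import Mathlib

/-- A (skew left) brace: a set with an additive group structure (not necessarily abelian)
and a multiplicative group structure sharing the same identity, satisfying the skew
distributive law `a * (b + c) = a * b + -a + a * c`. -/
class SkewBrace (B : Type*) extends AddGroup B, Group B where
  one_eq_zero : (1 : B) = (0 : B)
  skew_distrib : ∀ a b c : B, a * (b + c) = a * b + -a + a * c

/-- A group is supersoluble if it has a finite chain of normal subgroups with all
factors cyclic. -/
def Group.IsSupersoluble (G : Type*) [Group G] : Prop :=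
  ∃ (n : ℕ) (H : ℕ → Subgroup G),
    H 0 = ⊥ ∧ H n = ⊤ ∧ (∀ i, (H i).Normal) ∧ (∀ i, i < n → H i ≤ H (i + 1)) ∧
    ∀ i, i < n → ∃ x ∈ H (i + 1), ∀ y ∈ H (i + 1), ∃ k : ℤ, (x ^ k)⁻¹ * y ∈ H i

namespace SkewBrace

variable {B : Type*} [SkewBrace B]

/-- `lam a b = -a + a * b`, i.e. `λ_a(b)`. -/
def lam (a b : B) : B := -a + a * b

/-- the star operation `a ∗ b = λ_a(b) - b`. -/
def starOp (a b : B) : B := lam a b + -b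

/-- the additive commutator `[a,b]_+`. -/
def addCommutator (a b : B) : B := -a + -b + a + b

/-- A subbrace of `B`: a subset that is a subgroup of both `(B,+)` and `(B,·)`. -/
structure Subbrace (B : Type*) [SkewBrace B] where
  carrier : Set B
  zero_mem : (0 : B) ∈ carrier
  add_mem : ∀ {a b : B}, a ∈ carrier → b ∈ carrier → a + b ∈ carrier
  neg_mem : ∀ {a : B}, a ∈ carrier → -a ∈ carrier
  mul_mem : ∀ {a b : B}, a ∈ carrier → b ∈ carrier → a * b ∈ carrier
  inv_mem : ∀ {a : B}, a ∈ carrier → a⁻¹ ∈ carrier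

/-- An ideal of `B`: a subbrace that is normal in `(B,+)` and in `(B,·)` and is
invariant under all the maps `λ_b`. -/
structure BraceIdeal (B : Type*) [SkewBrace B] extends Subbrace B where
  addConj_mem : ∀ (b : B) {a : B}, a ∈ carrier → b + a + -b ∈ carrier
  mulConj_mem : ∀ (b : B) {a : B}, a ∈ carrier → b * a * b⁻¹ ∈ carrier
  lam_mem : ∀ (b : B) {a : B}, a ∈ carrier → lam b a ∈ carrier

/-- The additive subgroup underlying a subbrace. -/
def Subbrace.addSubgroup (S : Subbrace B) : AddSubgroup B where
  carrier := S.carrier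
  zero_mem' := S.zero_mem
  add_mem' := S.add_mem
  neg_mem' := S.neg_mem

/-- The multiplicative subgroup underlying a subbrace. -/
def Subbrace.subgroup (S : Subbrace B) : Subgroup B where
  carrier := S.carrier
  one_mem' := by rw [one_eq_zero]; exact S.zero_mem
  mul_mem' := S.mul_mem
  inv_mem' := S.inv_mem

/-- Given ideals `J ≤ I` of `B`, `MemSocQuotRel I J x` says that the coset of `x`
lies in `Soc(I/J) = Ker(λ) ∩ Z(I/J, +)` (for `I = B` take `I = Set.univ`). -/
def MemSocQuotRel (I J : Set B) (x : B) : Prop :=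
  x ∈ I ∧ (∀ y ∈ I, -y + lam x y ∈ J) ∧ ∀ y ∈ I, -(y + x) + (x + y) ∈ J

/-- Given ideals `J ≤ I` of `B`, `MemZetaQuotRel I J x` says that the coset of `x`
lies in `ζ(I/J) = Soc(I/J) ∩ Z(I/J, ·)`. -/
def MemZetaQuotRel (I J : Set B) (x : B) : Prop :=
  MemSocQuotRel I J x ∧ ∀ y ∈ I, (y * x)⁻¹ * (x * y) ∈ J

/-- The coset of `x` lies in `Soc(B/J)`. -/
def MemSocQuot (J : Set B) (x : B) : Prop := MemSocQuotRel Set.univ J x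

/-- The coset of `x` lies in `ζ(B/J)`. -/
def MemZetaQuot (J : Set B) (x : B) : Prop := MemZetaQuotRel Set.univ J x

/-- For ideals `I ≤ J`, the additive group of the quotient `J/I` is infinite cyclic. -/
def QuotAddInfCyclic (I J : Set B) : Prop :=
  ∃ x ∈ J, (∀ y ∈ J, ∃ n : ℤ, -(n • x) + y ∈ I) ∧ ∀ n : ℤ, n • x ∈ I → n = 0

/-- For ideals `I ≤ J`, the quotient `J/I` has prime order `p`. -/
def QuotPrimeOrder (I J : Set B) (p : ℕ) : Prop :=
  p.Prime ∧ ∃ x ∈ J, x ∉ I ∧ p • x ∈ I ∧ ∀ y ∈ J, ∃ n : ℤ, -(n • x) + y ∈ I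

/-- A brace is supersoluble if it has a finite chain of ideals each factor of which
either is additively infinite cyclic and contained in the socle of the corresponding
quotient, or has prime order. -/
def IsSupersoluble (B : Type*) [SkewBrace B] : Prop :=
  ∃ (n : ℕ) (I : ℕ → BraceIdeal B),
    (I 0).carrier = {0} ∧ (I n).carrier = Set.univ ∧
    (∀ i, i < n → (I i).carrier ⊆ (I (i + 1)).carrier) ∧
    ∀ i, i < n →
      (QuotAddInfCyclic (I i).carrier (I (i + 1)).carrier ∧
        ∀ x ∈ (I (i + 1)).carrier, MemSocQuot (I i).carrier x) ∨
      ∃ p : ℕ, QuotPrimeOrder (I i).carrier (I (i + 1)).carrier p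

/-- The upper socle series of the brace (carrier of the ideal) `I`. -/
def socChainRel (I : Set B) : ℕ → Set B
  | 0 => {0}
  | n + 1 => {x | MemSocQuotRel I (socChainRel I n) x}

/-- The upper central series of the brace (carrier of the ideal) `I`. -/
def zetaChainRel (I : Set B) : ℕ → Set B
  | 0 => {0}
  | n + 1 => {x | MemZetaQuotRel I (zetaChainRel I n) x}

/-- The upper socle series `Soc_n(B)` of `B`. -/
def socChain (B : Type*) [SkewBrace B] : ℕ → Set B := socChainRel Set.univ

/-- The upper central series `ζ_n(B)` of `B`. -/
def zetaChain (B : Type*) [SkewBrace B] : ℕ → Set B := zetaChainRel Set.univ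

/-- A brace is centrally nilpotent if its upper central series reaches `B`. -/
def IsCentrallyNilpotent (B : Type*) [SkewBrace B] : Prop :=
  ∃ m : ℕ, zetaChain B m = Set.univ

end SkewBrace

namespace SkewBrace

open scoped commutatorElement

/-- In a nilpotent group, a commutator-closed set in which every nontrivial element generates
everything is central. -/
theorem comm_eq_one_aux {H : Type*} [Group H] [hn : Group.IsNilpotent H] (S : Set H)
    (hgen : ∀ d ∈ S, d ≠ 1 → ∀ y ∈ S, ∃ k : ℤ, d ^ k = y)
    (hcomm : ∀ m ∈ S, ∀ g : H, ⁅m, g⁆ ∈ S) :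
    ∀ m ∈ S, ∀ g : H, ⁅m, g⁆ = 1 := by
  intro m hm g
  by_contra hd
  obtain ⟨n, hn⟩ := Subgroup.nilpotent_iff_lowerCentralSeries.mp hn
  have key : ∀ k : ℕ, ∀ y ∈ S, y ∈ (⊤ : Subgroup H).lowerCentralSeries k := by
    intro k
    induction k with
    | zero => intro y _; simp
    | succ k ih =>
      intro y hy
      obtain ⟨j, rfl⟩ := hgen _ (hcomm m hm g) hd y hy
      apply Subgroup.zpow_mem
      rw [Subgroup.lowerCentralSeries_succ]
      exact Subgroup.commutator_mem_commutator (ih m hm) (Subgroup.mem_top g)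
  have h1 := key n m hm
  rw [hn, Subgroup.mem_bot] at h1
  exact hd (by rw [h1]; simp)

section Aux

variable {B : Type*} [SkewBrace B]

theorem lam_add' (a b c : B) : lam a (b + c) = lam a b + lam a c := by
  simp only [lam, skew_distrib, add_assoc]

theorem mul_eq_add_lam (a b : B) : a * b = a + lam a b := by
  simp [lam]

theorem lam_mul (a b c : B) : lam (a * b) c = lam a (lam b c) := by
  have h1 : a * (b * c) = a + lam a (b * c) := mul_eq_add_lam _ _
  rw [mul_eq_add_lam b c, lam_add'] at h1
  rw [lam, mul_assoc, mul_eq_add_lam b c, mul_eq_add_lam a (b + lam b c), lam_add',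
    mul_eq_add_lam a b]
  simp [← add_assoc]

theorem lam_one (c : B) : lam (1 : B) c = c := by
  simp [lam, one_eq_zero]

theorem lam_inv (a c : B) : lam a (lam a⁻¹ c) = c := by
  rw [← lam_mul, mul_inv_cancel, lam_one]

/-- `lam a` as an additive homomorphism. -/
def lamHom (a : B) : B →+ B := AddMonoidHom.mk' (lam a) (lam_add' a)

instance normal_aux (J : BraceIdeal B) : J.toSubbrace.addSubgroup.Normal :=
  ⟨fun _ ha b => J.addConj_mem b ha⟩

theorem prime_gen (I J : BraceIdeal B) (hJI : J.carrier ⊆ I.carrier) (p : ℕ)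
    (h : QuotPrimeOrder J.carrier I.carrier p) (d : B) (hd : d ∈ I.carrier)
    (hdJ : d ∉ J.carrier) (y : B) (hy : y ∈ I.carrier) :
    ∃ k : ℤ, k • (d : B ⧸ J.toSubbrace.addSubgroup) = (y : B ⧸ J.toSubbrace.addSubgroup) := by
  obtain ⟨hp, x, hx, hxJ, hpx, hgen⟩ := h
  have cast : ∀ y ∈ I.carrier, ∃ n : ℤ, n • (x : B ⧸ J.toSubbrace.addSubgroup) = y := by
    intro y hy
    obtain ⟨n, hn⟩ := hgen y hy
    refine ⟨n, ?_⟩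
    rw [← QuotientAddGroup.mk_zsmul]
    exact QuotientAddGroup.eq.mpr hn
  have hpx' : (p : ℤ) • (x : B ⧸ J.toSubbrace.addSubgroup) = 0 := by
    rw [natCast_zsmul, ← QuotientAddGroup.mk_nsmul]
    exact (QuotientAddGroup.eq_zero_iff _).mpr hpx
  obtain ⟨a, ha⟩ := cast d hd
  obtain ⟨b, hb⟩ := cast y hy
  have hna : ¬ (p : ℤ) ∣ a := by
    rintro ⟨c, rfl⟩
    apply hdJ
    have : (d : B ⧸ J.toSubbrace.addSubgroup) = 0 := by
      rw [← ha, mul_zsmul', hpx', zsmul_zero]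
    exact (QuotientAddGroup.eq_zero_iff _).mp this
  have hcop : IsCoprime (p : ℤ) a :=
    (Nat.prime_iff_prime_int.mp hp).coprime_iff_not_dvd.mpr hna
  obtain ⟨u, v, huv⟩ := hcop
  refine ⟨b * v, ?_⟩
  rw [← ha, ← mul_zsmul']
  have : a * (b * v) = b + (p : ℤ) * (- (u * b)) := by linear_combination b * huv
  rw [← hb]
  rw [this, add_zsmul, mul_comm, mul_zsmul, hpx', zsmul_zero, add_zero]

theorem lam_diff_mem (I : BraceIdeal B) (m : B) (hm : m ∈ I.carrier) (b : B) :
    -b + lam m b ∈ I.carrier := by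
  have h1 : m * b = b + lam b (b⁻¹ * m * b) := by
    rw [← mul_eq_add_lam]; simp [mul_assoc]
  have h2 : b⁻¹ * m * b ∈ I.carrier := by
    simpa using I.mulConj_mem b⁻¹ hm
  have h3 := I.addConj_mem (-b) (I.neg_mem hm)
  have h4 := I.add_mem h3 (I.lam_mem b h2)
  rw [lam, h1]
  simpa [add_assoc] using h4

theorem mem_of_mul_mem (J : BraceIdeal B) (m b : B) (h : -b + m * b ∈ J.carrier) :
    m ∈ J.carrier := by
  have h1 : b⁻¹ * (m * b) = lam b⁻¹ (-b + m * b) := by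
    have : m * b = b * lam b⁻¹ (-b + m * b) := by
      rw [mul_eq_add_lam b, lam_inv]; simp
    exact inv_mul_eq_of_eq_mul this
  have h2 : b⁻¹ * (m * b) ∈ J.carrier := by rw [h1]; exact J.lam_mem _ h
  have h3 := J.mulConj_mem b h2
  simpa [mul_assoc] using h3

theorem prime_factor_soc [hn : Group.IsNilpotent (Multiplicative B)] (I J : BraceIdeal B)
    (hJI : J.carrier ⊆ I.carrier) (p : ℕ) (h : QuotPrimeOrder J.carrier I.carrier p) :
    ∀ x ∈ I.carrier, MemSocQuot J.carrier x := by
  have hQ : Group.IsNilpotent (Multiplicative (B ⧸ J.toSubbrace.addSubgroup)) :=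
    Group.nilpotent_of_surjective
      (AddMonoidHom.toMultiplicative (QuotientAddGroup.mk' J.toSubbrace.addSubgroup))
      (fun y => QuotientAddGroup.mk'_surjective _ y)
  have gen := prime_gen I J hJI p h
  have hc := comm_eq_one_aux (H := Multiplicative (B ⧸ J.toSubbrace.addSubgroup))
    {z | ∃ x ∈ I.carrier,
      z = Multiplicative.ofAdd (x : B ⧸ J.toSubbrace.addSubgroup)}
    (by
      rintro _ ⟨d, hd, rfl⟩ hd1 _ ⟨y, hy, rfl⟩
      have hdJ : d ∉ J.carrier := fun hdJ => hd1
        (congrArg Multiplicative.ofAdd ((QuotientAddGroup.eq_zero_iff d).mpr hdJ))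
      obtain ⟨k, hk⟩ := gen d hd hdJ y hy
      exact ⟨k, congrArg Multiplicative.ofAdd hk⟩)
    (by
      rintro _ ⟨m, hm, rfl⟩ g
      obtain ⟨g, rfl⟩ := QuotientAddGroup.mk'_surjective J.toSubbrace.addSubgroup g
      refine ⟨m + g + -m + -g, ?_, rfl⟩
      have := I.add_mem hm (I.addConj_mem g (I.neg_mem hm))
      simpa [add_assoc] using this)
  have hcomm : ∀ m ∈ I.carrier, ∀ g : B, AddCommute
      (m : B ⧸ J.toSubbrace.addSubgroup) (g : B ⧸ J.toSubbrace.addSubgroup) := by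
    intro m hm g
    have := hc _ ⟨m, hm, rfl⟩ (Multiplicative.ofAdd (g : B ⧸ J.toSubbrace.addSubgroup))
    rw [commutatorElement_eq_one_iff_mul_comm] at this
    exact this
  intro m hm
  refine ⟨trivial, ?_, ?_⟩
  · intro b _
    by_contra hd
    have hdI := lam_diff_mem I m hm b
    obtain ⟨k, hk⟩ := gen _ hdI hd (-m) (I.neg_mem hm)
    have hl : lam m (k • b) = k • (b + (-b + lam m b)) := by
      rw [add_neg_cancel_left]; exact map_zsmul (lamHom m) k b
    have e1 : ((lam m (k • b) : B) : B ⧸ J.toSubbrace.addSubgroup) = ((-m + k • b : B)) := by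
      rw [hl, QuotientAddGroup.mk_zsmul, QuotientAddGroup.mk_add,
        AddCommute.zsmul_add (hcomm _ hdI b).symm, hk, QuotientAddGroup.mk_add, QuotientAddGroup.mk_zsmul,
        ← QuotientAddGroup.mk_zsmul]
      exact (hcomm _ (I.neg_mem hm) (k • b)).symm
    rw [lam, QuotientAddGroup.mk_add, QuotientAddGroup.mk_add, add_right_inj] at e1
    have e2 : -(k • b) + m * (k • b) ∈ J.carrier := QuotientAddGroup.eq.mp e1.symm
    exact hd (lam_diff_mem J m (mem_of_mul_mem J m _ e2) b)
  · intro y _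
    exact QuotientAddGroup.eq.mp (hcomm m hm y).symm

theorem socChain_le_upper (n : ℕ) : ∀ x ∈ socChain B n,
    Multiplicative.ofAdd x ∈ Subgroup.upperCentralSeries (Multiplicative B) n := by
  induction n with
  | zero =>
    intro x hx
    have : x = 0 := hx
    subst this
    exact Subgroup.one_mem _
  | succ n ih =>
    intro x hx
    rw [Subgroup.mem_upperCentralSeries_succ_iff]
    intro y
    have h1 := ih _ (hx.2.2 (Multiplicative.toAdd y) trivial)
    have h2 := (inferInstance : (Subgroup.upperCentralSeries (Multiplicative B) n).Normal).conj_mem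
      _ h1 (y * Multiplicative.ofAdd x)
    have h3 : y * Multiplicative.ofAdd x *
        Multiplicative.ofAdd (-(Multiplicative.toAdd y + x) + (x + Multiplicative.toAdd y)) *
        (y * Multiplicative.ofAdd x)⁻¹ = ⁅Multiplicative.ofAdd x, y⁆ := by
      rw [commutatorElement_def]
      simp [mul_assoc]
    rwa [h3] at h2

end Aux

/-- For a supersoluble brace `B`, the additive group `(B,+)` is nilpotent if and
only if `B = Soc_n(B)` for some `n`, i.e. `B` has finite multipermutational level. -/
theorem addGroup_nilpotent_iff_finite_multipermutational_level (B : Type*)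
    [SkewBrace B] (hB : IsSupersoluble B) :
    Group.IsNilpotent (Multiplicative B) ↔ ∃ n : ℕ, socChain B n = Set.univ := by
  constructor
  · intro hn
    obtain ⟨n, I, h0, h1, hle, hf⟩ := hB
    have key : ∀ i, i ≤ n → (I i).carrier ⊆ socChain B i := by
      intro i
      induction i with
      | zero => intro _; rw [h0]; exact subset_rfl
      | succ i ih =>
        intro hi x hx
        have hs : MemSocQuot (I i).carrier x := by
          rcases hf i hi with h | ⟨p, hp⟩
          · exact h.2 x hx
          · exact prime_factor_soc (I (i + 1)) (I i) (hle i hi) p hp x hx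
        have ih' := ih (Nat.le_of_succ_le hi)
        exact ⟨trivial, fun y hy => ih' (hs.2.1 y hy), fun y hy => ih' (hs.2.2 y hy)⟩
    exact ⟨n, Set.eq_univ_of_univ_subset (h1 ▸ key n le_rfl)⟩
  · rintro ⟨n, hn⟩
    refine ⟨n, ?_⟩
    rw [eq_top_iff]
    intro x _
    exact socChain_le_upper n (Multiplicative.toAdd x) (hn ▸ trivial)

end SkewBrace
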